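/- arXiv:2112.01026 — 2 statements merged into one kernel-verified Lean document; each statement's English description precedes it below -/
import Mathlib

section
/- Let u and u' be K-linear automorphisms of E. Then there exists a K-linear automorphism t of E with u' = t ∘ u ∘ t⁻¹ if and only if for every monic irreducible polynomial p ∈ K[X] and every integer i ≥ 1, the kernels of p(u)^i and of p(u')^i have the same dimension over K. -/
open Polynomial

/-!
The `K`-linear conjugacy classes of automorphisms of `E` are the isomorphism classes of the
`K[X]`-modules `Module.AEval' u`, and `finrank K (ker (p(u) ^ i))` is the `K`-dimension of the
kernel of multiplication by `p ^ i` on that module (`kerDim`), which is an isomorphism invariant.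

Conversely, by the structure theorem the module is a finite product of `K[X] ⧸ (p_k ^ e_k)` with
`p_k` monic irreducible and `e_k ≥ 1` (`exists_equiv_pi`).  Rank-nullity shows that the kernel of
`f` on `K[X] ⧸ (g)` has the same dimension as the cokernel `K[X] ⧸ (g, f)`, so `q ^ j` has kernel
of dimension `deg q * ∑_{p_k = q} min e_k j` (`kerDim_eq_sum`).  The second difference of
`j ↦ min e j` is minus the indicator of `j = e`, so these dimensions determine how many `k` have
`(p_k, e_k) = (q, j)` (`card_fiber_eq`), hence the module up to isomorphism.
-/

section Helpers

variable {K : Type*} [Field K]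

/-- The `K`-dimension of the kernel of multiplication by the polynomial `f` on the
`K[X]`-module `V`. -/
noncomputable def kerDim (V : Type*) [AddCommGroup V] [Module K V] [Module K[X] V]
    [IsScalarTower K K[X] V] (f : K[X]) : ℕ :=
  Module.finrank K (LinearMap.ker (Algebra.lsmul K K V f))

lemma kerDim_congr {V W : Type*} [AddCommGroup V] [Module K V] [Module K[X] V]
    [IsScalarTower K K[X] V] [AddCommGroup W] [Module K W] [Module K[X] W]
    [IsScalarTower K K[X] W] (φ : V ≃ₗ[K[X]] W) (f : K[X]) : kerDim V f = kerDim W f := by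
  refine LinearEquiv.finrank_eq ((φ.restrictScalars K).ofSubmodules _ _ ?_)
  ext w
  simp only [Submodule.mem_map, LinearMap.mem_ker, Algebra.lsmul_coe]
  constructor
  · rintro ⟨v, hv, rfl⟩
    have : φ (f • v) = 0 := by rw [hv, map_zero]
    simpa using this
  · intro hw
    exact ⟨φ.symm w, by rw [← map_smul, hw, map_zero], by simp⟩

lemma kerDim_aeval {E : Type*} [AddCommGroup E] [Module K E] (u : Module.End K E)
    (p : K[X]) (i : ℕ) :
    kerDim (Module.AEval' u) (p ^ i) = Module.finrank K (LinearMap.ker ((aeval u p) ^ i)) := by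
  refine (LinearEquiv.finrank_eq ((Module.AEval'.of u).ofSubmodules _ _ ?_)).symm
  ext w
  obtain ⟨v, rfl⟩ := (Module.AEval'.of u).surjective w
  simp only [Submodule.mem_map, LinearMap.mem_ker, Algebra.lsmul_coe]
  rw [← Module.AEval.of_aeval_smul, map_pow, LinearEquiv.map_eq_zero_iff]
  simp

lemma kerDim_pi {ι : Type*} [Fintype ι] (V : ι → Type*) [∀ i, AddCommGroup (V i)]
    [∀ i, Module K (V i)] [∀ i, Module K[X] (V i)] [∀ i, IsScalarTower K K[X] (V i)]
    [∀ i, FiniteDimensional K (V i)] (f : K[X]) :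
    kerDim (∀ i, V i) f = ∑ i, kerDim (V i) f := by
  unfold kerDim
  rw [← Module.finrank_pi_fintype]
  exact LinearEquiv.finrank_eq
    { toFun := fun x i => ⟨x.1 i, congrFun x.2 i⟩
      invFun := fun y => ⟨fun i => (y i).1, funext fun i => (y i).2⟩
      map_add' := fun _ _ => rfl
      map_smul' := fun _ _ => rfl
      left_inv := fun _ => rfl
      right_inv := fun _ => rfl }

lemma finiteDimensional_quotient {g : K[X]} (hg : g ≠ 0) :
    FiniteDimensional K (K[X] ⧸ Ideal.span {g}) :=
  (AdjoinRoot.powerBasis hg).finite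

/-- By rank-nullity the kernel of `f` on `K[X] ⧸ (g)` has the dimension of the cokernel
`K[X] ⧸ (g, f)`. -/
lemma kerDim_quotient {f g d : K[X]} (hg : g ≠ 0)
    (hd : Ideal.span {g} ⊔ Ideal.span {f} = Ideal.span {d}) :
    kerDim (K[X] ⧸ Ideal.span {g}) f = d.natDegree := by
  have := finiteDimensional_quotient hg
  set L := Algebra.lsmul K K (K[X] ⧸ Ideal.span {g}) f with hL
  have h1 := LinearMap.finrank_range_add_finrank_ker L
  have h2 := Submodule.finrank_quotient_add_finrank (LinearMap.range L)
  have h3 : Module.finrank K ((K[X] ⧸ Ideal.span {g}) ⧸ LinearMap.range L)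
      = Module.finrank K (K[X] ⧸ Ideal.span {d}) := by
    let π : (K[X] ⧸ Ideal.span {g}) →ₐ[K] (K[X] ⧸ Ideal.span {d}) :=
      Ideal.Quotient.factorₐ K (hd ▸ le_sup_left)
    have hπ : Function.Surjective π := Ideal.Quotient.factor_surjective (hd ▸ le_sup_left)
    have hker : LinearMap.ker π.toLinearMap = LinearMap.range L := by
      ext x
      obtain ⟨x, rfl⟩ := Ideal.Quotient.mk_surjective x
      have e1 : π (Ideal.Quotient.mk _ x) = Ideal.Quotient.mk _ x := rfl
      simp only [LinearMap.mem_ker, LinearMap.mem_range, AlgHom.toLinearMap_apply, e1]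
      rw [Ideal.Quotient.eq_zero_iff_mem, ← hd]
      constructor
      · intro hx
        obtain ⟨a, ha, b, hb, rfl⟩ := Submodule.mem_sup.1 hx
        obtain ⟨c, rfl⟩ := Ideal.mem_span_singleton'.1 hb
        refine ⟨Ideal.Quotient.mk _ c, ?_⟩
        rw [map_add, Ideal.Quotient.eq_zero_iff_mem.2 ha, zero_add, mul_comm]
        rfl
      · rintro ⟨y, hy⟩
        obtain ⟨y, rfl⟩ := Ideal.Quotient.mk_surjective y
        have hy' : Ideal.Quotient.mk (Ideal.span {g}) (f * y) = Ideal.Quotient.mk _ x := hy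
        have h4 := Ideal.Quotient.eq.1 hy'.symm
        have h5 : x = (x - f * y) + y * f := by ring
        rw [h5]
        exact Submodule.add_mem_sup h4 (Ideal.mem_span_singleton'.2 ⟨y, rfl⟩)
    rw [← hker]
    exact LinearEquiv.finrank_eq (π.toLinearMap.quotKerEquivOfSurjective hπ)
  rw [finrank_quotient_span_eq_natDegree] at h3
  change Module.finrank K (LinearMap.ker L) = _
  omega

open Classical in
lemma kerDim_primary {p q : K[X]} (hp : p.Monic) (hpi : Irreducible p) (hq : q.Monic)
    (hqi : Irreducible q) (e j : ℕ) :
    kerDim (K[X] ⧸ Ideal.span {p ^ e}) (q ^ j) =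
      q.natDegree * (if p = q then min e j else 0) := by
  split_ifs with h
  · subst h
    rw [kerDim_quotient (d := p ^ min e j) (pow_ne_zero _ hpi.ne_zero), natDegree_pow, mul_comm]
    rcases le_total e j with h | h
    · rw [min_eq_left h]
      exact sup_eq_left.2 (Ideal.span_singleton_le_span_singleton.2 (pow_dvd_pow _ h))
    · rw [min_eq_right h]
      exact sup_eq_right.2 (Ideal.span_singleton_le_span_singleton.2 (pow_dvd_pow _ h))
  · rw [kerDim_quotient (d := 1) (pow_ne_zero _ hpi.ne_zero)]
    · simp
    · have hc : IsCoprime p q := (hpi.coprime_iff_not_dvd).2 fun hdvd =>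
        h (eq_of_monic_of_associated hp hq (hpi.associated_of_dvd hqi hdvd))
      rw [Ideal.span_singleton_one]
      exact (Ideal.isCoprime_span_singleton_iff _ _).2 (hc.pow) |>.sup_eq

open Classical in
lemma kerDim_eq_sum {V : Type*} [AddCommGroup V] [Module K V] [Module K[X] V]
    [IsScalarTower K K[X] V] {ι : Type*} [Fintype ι] {p : ι → K[X]} {e : ι → ℕ}
    (hp : ∀ i, (p i).Monic) (hpi : ∀ i, Irreducible (p i))
    (φ : V ≃ₗ[K[X]] ∀ i, K[X] ⧸ Ideal.span {p i ^ e i})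
    {q : K[X]} (hq : q.Monic) (hqi : Irreducible q) (j : ℕ) :
    kerDim V (q ^ j) = q.natDegree * ∑ i, if p i = q then min (e i) j else 0 := by
  have (i : ι) : FiniteDimensional K (K[X] ⧸ Ideal.span {p i ^ e i}) :=
    finiteDimensional_quotient (pow_ne_zero _ (hpi i).ne_zero)
  rw [kerDim_congr φ, kerDim_pi, Finset.mul_sum]
  exact Finset.sum_congr rfl fun i _ => kerDim_primary (hp i) (hpi i) hq hqi _ _

open Classical in
/-- The second difference of `j ↦ min e j` is minus the indicator function of `e`. -/
lemma sum_min_add_card {ι : Type*} [Fintype ι] (p : ι → K[X]) (e : ι → ℕ) (q : K[X]) (j : ℕ) :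
    (∑ i, if p i = q then min (e i) j else 0) + (∑ i, if p i = q then min (e i) (j + 2) else 0)
      + Fintype.card {i // (p i, e i) = (q, j + 1)}
      = 2 * ∑ i, if p i = q then min (e i) (j + 1) else 0 := by
  rw [Fintype.card_subtype, Finset.card_filter, ← Finset.sum_add_distrib,
    ← Finset.sum_add_distrib, Finset.mul_sum]
  refine Finset.sum_congr rfl fun i _ => ?_
  simp only [Prod.mk.injEq]
  by_cases h : p i = q
  · simp only [h, true_and, if_true]
    split_ifs <;> omega
  · simp [h]

open Classical in
lemma card_fiber_eq {ι ι' : Type*} [Fintype ι] [Fintype ι'] {p : ι → K[X]} {e : ι → ℕ}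
    {p' : ι' → K[X]} {e' : ι' → ℕ} {q : K[X]}
    (h : ∀ j, (∑ i, if p i = q then min (e i) j else 0)
      = ∑ i, if p' i = q then min (e' i) j else 0) (j : ℕ) :
    Fintype.card {i // (p i, e i) = (q, j + 1)} =
      Fintype.card {i // (p' i, e' i) = (q, j + 1)} := by
  have h1 := sum_min_add_card p e q j
  have h2 := sum_min_add_card p' e' q j
  rw [h, h, h] at h1
  omega

/-- Primary decomposition of a finitely generated torsion `K[X]`-module, normalised so that the
primes are monic and the exponents positive. -/
lemma exists_equiv_pi.{v, w} {K : Type v} [Field K]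
    {V : Type w} [AddCommGroup V] [Module K[X] V] [Module.Finite K[X] V]
    (hV : Module.IsTorsion K[X] V) :
    ∃ (ι : Type v) (_ : Fintype ι) (p : ι → K[X]) (e : ι → ℕ),
      (∀ i, (p i).Monic) ∧ (∀ i, Irreducible (p i)) ∧ (∀ i, e i ≠ 0) ∧
        Nonempty (V ≃ₗ[K[X]] ∀ i, K[X] ⧸ Ideal.span {p i ^ e i}) := by
  classical
  obtain ⟨ι, _, p, hp, e, ⟨φ⟩⟩ := Module.equiv_directSum_of_isTorsion hV
  refine ⟨{i // e i ≠ 0}, inferInstance, fun i => normalize (p i), fun i => e i,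
    fun i => monic_normalize (hp i).ne_zero,
    fun i => (normalize_associated (p i)).symm.irreducible (hp i), fun i => i.2, ⟨?_⟩⟩
  let φ' : V ≃ₗ[K[X]] ∀ i, K[X] ⧸ Ideal.span {p i ^ e i} :=
    φ.trans (DirectSum.linearEquivFunOnFintype K[X] ι _)
  -- Restriction to the indices with nonzero exponent; the other factors are trivial.
  let r : (∀ i, K[X] ⧸ Ideal.span {p i ^ e i}) →ₗ[K[X]]
      (∀ i : {i // e i ≠ 0}, K[X] ⧸ Ideal.span {p i ^ e i}) :=
    LinearMap.pi fun i => LinearMap.proj i.1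
  have hr : Function.Bijective r := by
    refine ⟨?_, ?_⟩
    · intro x y h
      funext i
      by_cases hi : e i = 0
      · have : Subsingleton (K[X] ⧸ Ideal.span {p i ^ e i}) := by
          rw [hi, pow_zero, Ideal.span_singleton_one]
          exact Ideal.Quotient.subsingleton_iff.2 rfl
        exact Subsingleton.elim _ _
      · exact congrFun h ⟨i, hi⟩
    · intro y
      refine ⟨fun i => if hi : e i ≠ 0 then y ⟨i, hi⟩ else 0, ?_⟩
      funext i
      exact dif_pos i.2
  exact φ'.trans ((LinearEquiv.ofBijective r hr).trans
    (LinearEquiv.piCongrRight fun i => Submodule.quotEquivOfEq _ _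
      (Ideal.span_singleton_eq_span_singleton.2 ((normalize_associated (p i)).symm.pow_pow))))

lemma nonempty_equiv_of_kerDim_eq {V W : Type*} [AddCommGroup V] [Module K V] [Module K[X] V]
    [IsScalarTower K K[X] V] [AddCommGroup W] [Module K W] [Module K[X] W]
    [IsScalarTower K K[X] W] [Module.Finite K[X] V] [Module.Finite K[X] W]
    (hV : Module.IsTorsion K[X] V) (hW : Module.IsTorsion K[X] W)
    (h : ∀ p : K[X], p.Monic → Irreducible p → ∀ i : ℕ, 1 ≤ i →
      kerDim V (p ^ i) = kerDim W (p ^ i)) : Nonempty (V ≃ₗ[K[X]] W) := by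
  classical
  obtain ⟨ι, _, p, e, hp, hpi, he, ⟨φ⟩⟩ := exists_equiv_pi hV
  obtain ⟨ι', _, p', e', hp', hpi', he', ⟨ψ⟩⟩ := exists_equiv_pi hW
  have key (c : K[X] × ℕ) : Nonempty ({i // (p i, e i) = c} ≃ {i // (p' i, e' i) = c}) := by
    obtain ⟨q, j⟩ := c
    by_cases hc : q.Monic ∧ Irreducible q ∧ j ≠ 0
    · obtain ⟨hq, hqi, hj⟩ := hc
      obtain ⟨j, rfl⟩ := Nat.exists_eq_succ_of_ne_zero hj
      refine Fintype.card_eq.1 (card_fiber_eq (fun j => ?_) j)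
      rcases Nat.eq_zero_or_pos j with rfl | hj
      · simp
      · have := h q hq hqi j hj
        rw [kerDim_eq_sum hp hpi φ hq hqi, kerDim_eq_sum hp' hpi' ψ hq hqi] at this
        exact Nat.eq_of_mul_eq_mul_left hqi.natDegree_pos this
    -- Both fibres are empty unless `q` is monic irreducible and `j` is positive.
    · have h1 : IsEmpty {i // (p i, e i) = (q, j)} := ⟨by
        rintro ⟨i, hi⟩
        obtain ⟨rfl, rfl⟩ := Prod.mk.inj hi
        exact hc ⟨hp i, hpi i, he i⟩⟩
      have h2 : IsEmpty {i // (p' i, e' i) = (q, j)} := ⟨by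
        rintro ⟨i, hi⟩
        obtain ⟨rfl, rfl⟩ := Prod.mk.inj hi
        exact hc ⟨hp' i, hpi' i, he' i⟩⟩
      exact ⟨Equiv.equivOfIsEmpty _ _⟩
  have F := fun c => Classical.choice (key c)
  let σ : ι ≃ ι' := (Equiv.sigmaFiberEquiv fun i => (p i, e i)).symm.trans
    ((Equiv.sigmaCongrRight F).trans (Equiv.sigmaFiberEquiv fun i => (p' i, e' i)))
  have hσ (i : ι) : (p' (σ i), e' (σ i)) = (p i, e i) := (F (p i, e i) ⟨i, rfl⟩).2
  have hσ' (i : ι) : p i ^ e i = p' (σ i) ^ e' (σ i) := by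
    obtain ⟨h1, h2⟩ := Prod.mk.inj (hσ i)
    rw [h1, h2]
  exact ⟨φ.trans (((LinearEquiv.piCongrRight fun i =>
    Submodule.quotEquivOfEq _ _ (by rw [hσ' i])).trans
      (LinearEquiv.piCongrLeft K[X] (fun i => K[X] ⧸ Ideal.span {p' i ^ e' i}) σ)).trans ψ.symm)⟩

/-- Conjugating `K`-automorphisms are the same as isomorphisms of the associated
`K[X]`-modules. -/
lemma conj_iff_nonempty_equiv {E : Type*} [AddCommGroup E] [Module K E] (u u' : E ≃ₗ[K] E) :
    (∃ t : E ≃ₗ[K] E, ∀ x, u' x = t (u (t.symm x))) ↔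
      Nonempty (Module.AEval' (u : Module.End K E) ≃ₗ[K[X]]
        Module.AEval' (u' : Module.End K E)) := by
  constructor
  · rintro ⟨t, ht⟩
    refine ⟨LinearEquiv.ofAEval _ (t.trans (Module.AEval'.of (u' : Module.End K E))) fun m => ?_⟩
    rw [LinearEquiv.trans_apply, LinearEquiv.trans_apply, Module.AEval'.X_smul_of]
    congr 1
    simpa using (ht (t m)).symm
  · rintro ⟨φ⟩
    refine ⟨((Module.AEval'.of (u : Module.End K E)).trans (φ.restrictScalars K)).trans
      (Module.AEval'.of (u' : Module.End K E)).symm, fun x => ?_⟩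
    obtain ⟨y, rfl⟩ := ((Module.AEval'.of (u : Module.End K E)).trans
      ((φ.restrictScalars K).trans (Module.AEval'.of (u' : Module.End K E)).symm)).surjective x
    have h1 := Module.AEval'.X_smul_of (u : Module.End K E) y
    have h2 := congrArg (fun z => (Module.AEval'.of (u' : Module.End K E)).symm (φ z)) h1
    simp only [map_smul, Module.AEval'.of_symm_X_smul] at h2
    simpa using h2

end Helpers

/-- Two automorphisms `u`, `u'` of a finite-dimensional `K`-vector space are conjugate by a
linear automorphism iff for every monic irreducible `p` and every `i ≥ 1` the kernels of
`p(u)^i` and `p(u')^i` have the same dimension. -/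
theorem stmt_1 {K E : Type*} [Field K] [AddCommGroup E] [Module K E]
    [FiniteDimensional K E] (u u' : E ≃ₗ[K] E) :
    (∃ t : E ≃ₗ[K] E, ∀ x, u' x = t (u (t.symm x))) ↔
      (∀ p : K[X], p.Monic → Irreducible p → ∀ i : ℕ, 1 ≤ i →
        Module.finrank K (LinearMap.ker ((aeval (u : Module.End K E) p) ^ i)) =
        Module.finrank K (LinearMap.ker ((aeval ((u' : Module.End K E)) p) ^ i))) := by
  rw [conj_iff_nonempty_equiv]
  simp only [← kerDim_aeval]
  constructor
  · rintro ⟨φ⟩ p - - i -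
    exact kerDim_congr φ _
  · exact nonempty_equiv_of_kerDim_eq (Module.AEval.isTorsion_of_finiteDimensional K E _)
      (Module.AEval.isTorsion_of_finiteDimensional K E _)
end

section
/- Let p ∈ K[X] be monic irreducible with p(0) ≠ 0 such that reverse(p) is not a scalar multiple of p, let p̄₀ = p(0)⁻¹ • reverse(p), and let u and u' be symplectic transformations of E both having minimal polynomial p^k · p̄₀^k. Then u and u' are conjugate by a symplectic transformation of E (there is a symplectic w with u' = w ∘ u ∘ w⁻¹) if and only if they are conjugate by some K-linear automorphism of E. -/
/-!
Write `r = reverse p`. Since `p` is irreducible and `r` is not a multiple of `p`, the polynomials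
`p ^ k` and `r ^ k` are coprime, so `E` splits as `ker p(u)^k ⊕ ker r(u)^k`. If `f` is coprime to
its reverse, then `ker f(v)` is totally isotropic for every symplectic `v`, because
`⟨f(v) x, v^d y⟩ = ⟨x, (reverse f)(v) y⟩` with `d = deg f`, and `(reverse f)(v)` is invertible on
`ker f(v)` (`isotropic_of_isCoprime`). Hence both summands are totally isotropic, for `u` as well
as for `u'`.

Given a linear `t` with `u' = t u t⁻¹`, let `s` be its contragredient, `⟨t x, s y⟩ = ⟨x, y⟩`
(`exists_contragredient`). As `u` and `u'` are symplectic, `s` also intertwines `u` and `u'`. The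
map `w` equal to `t` on `ker p(u)^k` and to `s` on `ker r(u)^k` then intertwines `u` and `u'`, and it
is symplectic: the pairings inside each summand vanish before and after applying `w`, and the cross
pairings are preserved by the choice of `s`.
-/

open Polynomial

section

variable {K E : Type*} [Field K] [AddCommGroup E] [Module K E]

/-- For `v` preserving `B`, the adjoint of `f(v)` is `f(v⁻¹)`, that is `v⁻ᴺ (reflect N f)(v)`; here
it is written without inverses. -/
lemma apply_aeval_pow (B : E →ₗ[K] E →ₗ[K] K) (v : Module.End K E)
    (hv : ∀ x y, B (v x) (v y) = B x y) (N : ℕ) (f : K[X]) (hf : f.natDegree ≤ N) (x y : E) :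
    B (aeval v f x) ((v ^ N) y) = B x (aeval v (reflect N f) y) := by
  have hpow : ∀ n x y, B ((v ^ n) x) ((v ^ n) y) = B x y := by
    intro n
    induction n with
    | zero => simp
    | succ n ih => intro x y; rw [pow_succ, Module.End.mul_apply, Module.End.mul_apply, ih, hv]
  refine induction_with_natDegree_le
    (fun f => B (aeval v f x) ((v ^ N) y) = B x (aeval v (reflect N f) y)) N ?_ ?_ ?_ f hf
  · simp
  · intro n c _ hn
    obtain ⟨m, rfl⟩ := Nat.exists_eq_add_of_le hn
    rw [reflect_C_mul_X_pow, revAt_le hn, Nat.add_sub_cancel_left, pow_add]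
    simp [Module.algebraMap_end_apply, hpow]
  · intro f g _ _ hf hg
    simp [reflect_add, hf, hg]

/-- The kernel of `f(v)` is totally isotropic when `f` is coprime to its reverse. -/
lemma isotropic_of_isCoprime (B : E →ₗ[K] E →ₗ[K] K) (v : Module.End K E)
    (hv : ∀ x y, B (v x) (v y) = B x y) (f : K[X]) (hf : IsCoprime f f.reverse) {x y : E}
    (hx : aeval v f x = 0) (hy : aeval v f y = 0) : B x y = 0 := by
  obtain ⟨a, b, hab⟩ := hf
  -- On `ker f(v)` the operator `b(v)` inverts `(reverse f)(v)`.
  have h : y = aeval v f.reverse (aeval v b y) := by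
    have := congrArg (fun g => aeval v g y) hab
    simp only [map_add, map_mul, LinearMap.add_apply, Module.End.mul_apply, hy, map_zero,
      zero_add, map_one, Module.End.one_apply] at this
    rw [← Module.End.mul_apply, ← map_mul, mul_comm, map_mul, Module.End.mul_apply, this]
  rw [h, reverse, ← apply_aeval_pow B v hv _ f le_rfl, hx, map_zero, LinearMap.zero_apply]

/-- An intertwiner of two operators intertwines all polynomials in them. -/
lemma aeval_apply_of_intertwines (v v' t : Module.End K E) (h : ∀ x, t (v x) = v' (t x))
    (f : K[X]) (x : E) : t (aeval v f x) = aeval v' f (t x) := by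
  have h1 : ∀ n x, t ((v ^ n) x) = (v' ^ n) (t x) := by
    intro n
    induction n with
    | zero => simp
    | succ n ih => intro x; rw [pow_succ, pow_succ, Module.End.mul_apply, Module.End.mul_apply, ih, h]
  induction f using Polynomial.induction_on' with
  | add f g hf hg => simp [hf, hg]
  | monomial n c => simp [aeval_monomial, Module.algebraMap_end_apply, h1]

/-- The inverse of the `B`-adjoint of `t`. -/
lemma exists_contragredient [FiniteDimensional K E] (B : E →ₗ[K] E →ₗ[K] K)
    (hnd : ∀ y, (∀ x, B x y = 0) → y = 0) (t : E ≃ₗ[K] E) :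
    ∃ s : Module.End K E, ∀ x y, B (t x) (s y) = B x y := by
  have hinj : Function.Injective B.flip := by
    rw [injective_iff_map_eq_zero]
    intro y hy
    exact hnd y fun x => by simpa using LinearMap.congr_fun hy x
  let F : E ≃ₗ[K] Module.Dual K E :=
    LinearMap.linearEquivOfInjective B.flip hinj Subspace.dual_finrank_eq.symm
  refine ⟨F.symm.toLinearMap ∘ₗ t.symm.toLinearMap.dualMap ∘ₗ F.toLinearMap, fun x y => ?_⟩
  have hF : ∀ z x, F z x = B x z := fun z x => rfl
  rw [← hF]
  simp [hF]

/-- An irreducible polynomial whose reverse is not a scalar multiple of it is coprime to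
its reverse: the reverse is nonzero of degree at most `deg p`. -/
lemma isCoprime_reverse (p : K[X]) (hirr : Irreducible p)
    (hns : ¬ ∃ c : K, p.reverse = c • p) : IsCoprime p p.reverse := by
  refine (hirr.coprime_iff_not_dvd).2 ?_
  rintro ⟨g, hg⟩
  have hr : p.reverse ≠ 0 := by simpa using hirr.ne_zero
  have hg0 : g ≠ 0 := by rintro rfl; exact hr (by simpa using hg)
  have hdeg : p.natDegree + g.natDegree ≤ p.natDegree := by
    rw [← natDegree_mul hirr.ne_zero hg0, ← hg]
    exact reverse_natDegree_le p
  refine hns ⟨g.coeff 0, ?_⟩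
  rw [smul_eq_C_mul, ← eq_C_of_natDegree_eq_zero (by omega), hg, mul_comm]

lemma reverse_pow_eq (p : K[X]) (k : ℕ) : (p ^ k).reverse = p.reverse ^ k := by
  induction k with
  | zero => simpa using reverse_C (1 : K)
  | succ k ih => rw [pow_succ, pow_succ, reverse_mul_of_domain, ih]

lemma reverse_reverse_eq (p : K[X]) (hp0 : p.eval 0 ≠ 0) : p.reverse.reverse = p := by
  have h : p.natTrailingDegree = 0 :=
    natTrailingDegree_eq_zero.2 (Or.inr (by rwa [coeff_zero_eq_eval_zero]))
  have h2 : p.reverse.natDegree = p.natDegree := by rw [reverse_natDegree, h, Nat.sub_zero]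
  rw [reverse, h2, reverse, reflect_reflect]

end

/-- Two symplectic transformations `u`, `u'` with the same minimal polynomial `p^k * p̄₀^k`
(where `p` is monic irreducible, `p(0) ≠ 0`, `reverse p` not a scalar multiple of `p`, and
`p̄₀ = p(0)⁻¹ • reverse p`) are conjugate by a symplectic transformation of `E` iff they are
conjugate by some linear automorphism of `E`. -/
theorem stmt_9 {K E : Type*} [Field K] (hchar : (2 : K) ≠ 0)
    [AddCommGroup E] [Module K E] [FiniteDimensional K E]
    (B : E →ₗ[K] E →ₗ[K] K) (halt : ∀ x, B x x = 0)
    (hnd : ∀ x, (∀ y, B x y = 0) → x = 0)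
    (u u' : E ≃ₗ[K] E)
    (hu : ∀ x y, B (u x) (u y) = B x y) (hu' : ∀ x y, B (u' x) (u' y) = B x y)
    (p : K[X]) (hp : p.Monic) (hirr : Irreducible p) (hp0 : p.eval 0 ≠ 0)
    (hns : ¬ ∃ c : K, p.reverse = c • p)
    (k : ℕ)
    (hmin : minpoly K (u : Module.End K E) = p ^ k * ((p.eval 0)⁻¹ • p.reverse) ^ k)
    (hmin' : minpoly K (u' : Module.End K E) = p ^ k * ((p.eval 0)⁻¹ • p.reverse) ^ k) :
    (∃ w : E ≃ₗ[K] E, (∀ x y, B (w x) (w y) = B x y) ∧ ∀ x, u' x = w (u (w.symm x))) ↔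
      (∃ t : E ≃ₗ[K] E, ∀ x, u' x = t (u (t.symm x))) := by
  refine ⟨fun ⟨w, _, hw⟩ => ⟨w, hw⟩, ?_⟩
  rintro ⟨t, ht⟩
  have hanti : ∀ x y, B x y = - B y x := by
    intro x y
    have h := halt (x + y)
    simp only [map_add, LinearMap.add_apply, halt, zero_add, add_zero] at h
    exact eq_neg_of_add_eq_zero_right h
  have htu : ∀ x, t (u x) = u' (t x) := by intro x; simp [ht]
  have hnd' : ∀ y, (∀ x, B x y = 0) → y = 0 := fun y h =>
    hnd y fun x => by rw [hanti, h, neg_zero]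
  obtain ⟨s, hs⟩ := exists_contragredient B hnd' t
  -- `s` intertwines `u` and `u'`: test against the vectors `t (u x) = u' (t x)`, which exhaust `E`.
  have hsu : ∀ y, s (u y) = u' (s y) := by
    intro y
    rw [← sub_eq_zero]
    refine hnd' _ fun z => ?_
    obtain ⟨x, rfl⟩ := (u.trans t).surjective z
    rw [LinearEquiv.trans_apply, map_sub, hs, hu, htu, hu', hs, sub_self]
  set r := p.reverse with hr
  have hcop : IsCoprime p r := isCoprime_reverse p hirr hns
  have hcopk : IsCoprime (p ^ k) (r ^ k) := hcop.pow
  have hp_iso : IsCoprime (p ^ k) (p ^ k).reverse := by rw [reverse_pow_eq]; exact hcopk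
  have hr_iso : IsCoprime (r ^ k) (r ^ k).reverse := by
    rw [reverse_pow_eq, hr, reverse_reverse_eq p hp0]; exact hcopk.symm
  have hann : aeval (u : Module.End K E) (p ^ k * r ^ k) = 0 := by
    have h := minpoly.aeval K (u : Module.End K E)
    rw [hmin, _root_.smul_pow, mul_smul_comm, map_smul] at h
    exact (smul_eq_zero.1 h).resolve_left (pow_ne_zero _ (inv_ne_zero hp0))
  obtain ⟨a, b, hab⟩ := hcopk
  -- `P` and `Q` are the projections onto `ker p(u)^k` and `ker r(u)^k` along each other.
  set P : Module.End K E := aeval (u : Module.End K E) (b * r ^ k) with hP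
  set Q : Module.End K E := aeval (u : Module.End K E) (a * p ^ k) with hQ
  have hPQ : ∀ x, P x + Q x = x := by
    intro x
    have := congrArg (fun g => aeval (u : Module.End K E) g x) hab
    simpa [hP, hQ, add_comm] using this
  have hpP : ∀ x, aeval (u : Module.End K E) (p ^ k) (P x) = 0 := by
    intro x
    rw [hP, ← Module.End.mul_apply, ← map_mul, mul_left_comm, map_mul, hann, mul_zero,
      LinearMap.zero_apply]
  have hrQ : ∀ x, aeval (u : Module.End K E) (r ^ k) (Q x) = 0 := by
    intro x
    rw [hQ, ← Module.End.mul_apply, ← map_mul, mul_left_comm, mul_comm (r ^ k), map_mul, hann,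
      mul_zero, LinearMap.zero_apply]
  have hPu : ∀ x, P (u x) = u (P x) := fun x =>
    (aeval_apply_of_intertwines (u : Module.End K E) u u (fun _ => rfl) _ x).symm
  have hQu : ∀ x, Q (u x) = u (Q x) := fun x =>
    (aeval_apply_of_intertwines (u : Module.End K E) u u (fun _ => rfl) _ x).symm
  have hPP : ∀ x y, B (P x) (P y) = 0 := fun x y =>
    isotropic_of_isCoprime B u hu _ hp_iso (hpP x) (hpP y)
  have hQQ : ∀ x y, B (Q x) (Q y) = 0 := fun x y =>
    isotropic_of_isCoprime B u hu _ hr_iso (hrQ x) (hrQ y)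
  have htP : ∀ x, aeval (u' : Module.End K E) (p ^ k) (t (P x)) = 0 := by
    intro x
    have h := aeval_apply_of_intertwines (u : Module.End K E) u' t htu (p ^ k) (P x)
    rw [hpP, map_zero] at h
    exact h.symm
  have hsQ : ∀ x, aeval (u' : Module.End K E) (r ^ k) (s (Q x)) = 0 := by
    intro x
    have h := aeval_apply_of_intertwines (u : Module.End K E) u' s hsu (r ^ k) (Q x)
    rw [hrQ, map_zero] at h
    exact h.symm
  have htt : ∀ x y, B (t (P x)) (t (P y)) = 0 := fun x y =>
    isotropic_of_isCoprime B u' hu' _ hp_iso (htP x) (htP y)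
  have hss : ∀ x y, B (s (Q x)) (s (Q y)) = 0 := fun x y =>
    isotropic_of_isCoprime B u' hu' _ hr_iso (hsQ x) (hsQ y)
  let w : Module.End K E := t.toLinearMap ∘ₗ P + s ∘ₗ Q
  have hw : ∀ x, w x = t (P x) + s (Q x) := fun x => rfl
  have hwB : ∀ x y, B (w x) (w y) = B x y := by
    intro x y
    have h : B x y = B (P x + Q x) (P y + Q y) := by rw [hPQ, hPQ]
    rw [h, hw, hw]
    simp only [map_add, LinearMap.add_apply, htt, hss, hPP, hQQ, hs]
    rw [hanti (s (Q x)) (t (P y)), hs, ← hanti]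
  have hwinj : Function.Injective w := by
    rw [injective_iff_map_eq_zero]
    intro x hx
    exact hnd x fun y => by rw [← hwB, hx, map_zero, LinearMap.zero_apply]
  have hwu : ∀ x, w (u x) = u' (w x) := by
    intro x
    rw [hw, hw, hPu, hQu, htu, hsu, map_add]
  let W : E ≃ₗ[K] E := LinearEquiv.ofInjectiveEndo w hwinj
  have hW : ∀ x, W x = w x := fun x => rfl
  refine ⟨W, hwB, fun x => ?_⟩
  rw [hW, hwu, ← hW, LinearEquiv.apply_symm_apply]
end
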